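/- Let n ≥ 3. There exists a constant c_n > 0 such that for every continuous function f ∈ C(S^{n−1}), the cosine transform Cf belongs to C²(S^{n−1}) and ‖Cf‖_{C²} ≤ c_n ‖f‖_C. -/

import Mathlib

/-!
The function `cosT f` is positively homogeneous of degree one, so it is its own extension `homExt`,
and the claim concerns the derivatives of `u ↦ ∫ |⟪u, x⟫| f x` over the sphere.

*Passage to Lebesgue measure.*  The Hausdorff measure on the sphere is finite
(`sphMeas_sphere_lt_top`) and rotation invariant.  Two such measures are proportional
(`smul_eq_smul_of_invariant`): their characteristic functions are radial, and integrating
`exp (i r ⟪x, y⟫)` against both measures in either order compares them.  Hence the spherical measure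
is a multiple of the radial projection of a weighted Lebesgue measure on a shell, and
`cosT f u = ∫ |⟪u, x⟫| h x dx` over the whole space, where `h` is continuous, vanishes outside the
ball of radius `3`, and is bounded by a multiple of `CNorm f` (`exists_cosT_eq`).

*First derivative.*  Since hyperplanes are null sets, differentiation under the integral gives
`∫ sgn ⟪u, x⟫ ⟪·, x⟫ h x dx` at every `u ≠ 0` (`hasFDerivAt_absT`).

*Second derivative.*  Put `k x = ⟪·, x⟫ h x` and fix a unit vector `e` with `0 < ⟪u, e⟫`.
Integrating first along the lines `t ↦ x + t e` (`integral_eq_slice`), the inner integral is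
`∫ sgn (t - s) k (x + t e) dt` with `s = -⟪u, x⟫ / ⟪u, e⟫`.  It is differentiable in `s` with
derivative `-2 k (x + s e)`, and `s` is smooth in `u`.  So the first derivative is `C¹` with an
explicit derivative (`hasFDerivAt_integral_sg_inner`), which for `u = e` is bounded by a constant
depending only on the dimension times the supremum of `|h|`.
-/

open MeasureTheory Metric Set Filter
open scoped RealInnerProductSpace Topology Pointwise NNReal ENNReal

noncomputable section

/-- `Euc n` is Euclidean space `ℝⁿ`. -/
abbrev Euc (n : ℕ) : Type := EuclideanSpace ℝ (Fin n)

/-- `uball k` is `ω_k`, the volume of the unit ball of `ℝ^k`. -/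
def uball (k : ℕ) : ℝ := (volume (closedBall (0 : Euc k) 1)).toReal

/-- The spherical Lebesgue measure on `S^{n-1} ⊂ ℝⁿ`:
the `(n-1)`-dimensional Hausdorff measure. -/
def sphMeas (n : ℕ) : Measure (Euc n) := Measure.hausdorffMeasure ((n : ℝ) - 1)

/-- The support function of a set `K ⊆ ℝⁿ`. -/
def suppFn {n : ℕ} (K : Set (Euc n)) (x : Euc n) : ℝ :=
  sSup ((fun y => ⟪y, x⟫) '' K)

/-- `K` is a convex body: compact, convex, with nonempty interior. -/
def IsConvexBody {n : ℕ} (K : Set (Euc n)) : Prop :=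
  IsCompact K ∧ Convex ℝ K ∧ (interior K).Nonempty

/-- Lebesgue volume of a subset of `ℝⁿ`, as a real number. -/
def vol {n : ℕ} (K : Set (Euc n)) : ℝ := (volume K).toReal

/-- `projSupp K u` is the `(n-1)`-dimensional measure of the orthogonal projection of
`K` onto the hyperplane `u^⊥` (for a unit vector `u`); this is the support function
of the projection body `ΠK`. -/
def projSupp {n : ℕ} (K : Set (Euc n)) (u : Euc n) : ℝ :=
  (Measure.hausdorffMeasure ((n : ℝ) - 1)
    ((fun x : Euc n => x - ⟪x, u⟫ • u) '' K)).toReal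

/-- The projection body `ΠK` of `K`: the convex body whose support function is
`u ↦ V_{n-1}(K | u^⊥)`. -/
def projBody {n : ℕ} (K : Set (Euc n)) : Set (Euc n) :=
  {x | ∀ u ∈ sphere (0 : Euc n) 1, ⟪x, u⟫ ≤ projSupp K u}

/-- The convex body determined by a function `f` on the sphere (the Wulff shape /
intersection of halfspaces); if `f` is a support function this body has support function `f`. -/
def bodyOf {n : ℕ} (f : Euc n → ℝ) : Set (Euc n) :=
  {x | ∀ u ∈ sphere (0 : Euc n) 1, ⟪x, u⟫ ≤ f u}

/-- The 1-homogeneous extension of a function on the unit sphere. -/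
def homExt {n : ℕ} (f : Euc n → ℝ) (x : Euc n) : ℝ := ‖x‖ * f (‖x‖⁻¹ • x)

/-- The Euclidean Laplacian of `F : ℝⁿ → ℝ`. -/
def lapl {n : ℕ} (F : Euc n → ℝ) (x : Euc n) : ℝ :=
  ∑ i : Fin n, fderiv ℝ (fun y => fderiv ℝ F y (EuclideanSpace.single i 1)) x
    (EuclideanSpace.single i 1)

/-- The operator `□f = Δ_{S^{n-1}} f + (n-1) f` on functions on the sphere, realized as the
Euclidean Laplacian of the 1-homogeneous extension (restricted to the sphere). -/
def boxOp {n : ℕ} (f : Euc n → ℝ) (x : Euc n) : ℝ := lapl (homExt f) x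

/-- The cosine transform `Cf(u) = ∫_{S^{n-1}} |u·x| f(x) dx`. -/
def cosT {n : ℕ} (f : Euc n → ℝ) (u : Euc n) : ℝ :=
  ∫ x in sphere (0 : Euc n) 1, |⟪u, x⟫| * f x ∂(sphMeas n)

/-- The spherical Radon (Funk) transform
`Rf(u) = (1/((n-1)ω_{n-1})) ∫_{S^{n-1} ∩ u^⊥} f`, normalized so that `R1 = 1`. -/
def radon {n : ℕ} (f : Euc n → ℝ) (u : Euc n) : ℝ :=
  (1 / (((n : ℝ) - 1) * uball (n - 1))) *
    ∫ x in sphere (0 : Euc n) 1 ∩ {x : Euc n | ⟪x, u⟫ = 0}, f x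
      ∂(Measure.hausdorffMeasure ((n : ℝ) - 2))

/-- The `C²(S^{n-1})` norm of a function on the sphere (computed through its
1-homogeneous extension, which only depends on the values of `f` on the sphere). -/
def C2Norm {n : ℕ} (f : Euc n → ℝ) : ℝ :=
  ⨆ x : sphere (0 : Euc n) 1,
    (|homExt f (x : Euc n)| + ‖fderiv ℝ (homExt f) (x : Euc n)‖ +
      ‖iteratedFDeriv ℝ 2 (homExt f) (x : Euc n)‖)

/-- The sup (`C`) norm of a function on the sphere. -/
def CNorm {n : ℕ} (f : Euc n → ℝ) : ℝ := ⨆ x : sphere (0 : Euc n) 1, |f (x : Euc n)|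

/-- `f` is of class `C²` as a function on the sphere: its 1-homogeneous extension is
`C²` away from the origin. -/
def C2Sph {n : ℕ} (f : Euc n → ℝ) : Prop :=
  ContDiffOn ℝ 2 (homExt f) {(0 : Euc n)}ᶜ

/-- `f` is even on the sphere. -/
def EvenSph {n : ℕ} (f : Euc n → ℝ) : Prop := ∀ x ∈ sphere (0 : Euc n) 1, f (-x) = f x

/-- `f` is the curvature function of `K`: for every convex body `L`, the first variation of
volume satisfies `nV₁(K,L) = ∫_{S^{n-1}} h_L f dx`, i.e. the surface area measure of `K`
has density `f` with respect to spherical Lebesgue measure. -/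
def HasCurvFn {n : ℕ} (K : Set (Euc n)) (f : Euc n → ℝ) : Prop :=
  ∀ L : Set (Euc n), IsConvexBody L →
    Tendsto (fun t : ℝ => (vol (K + t • L) - vol K) / t) (𝓝[>] (0 : ℝ))
      (𝓝 (∫ x in sphere (0 : Euc n) 1, suppFn L x * f x ∂(sphMeas n)))

/-- `K` is a convex body of class `C²₊`: its support function is `C²` and it has a positive
continuous curvature function. -/
def IsC2Plus {n : ℕ} (K : Set (Euc n)) : Prop :=
  IsConvexBody K ∧ C2Sph (suppFn K) ∧
    ∃ f : Euc n → ℝ, ContinuousOn f (sphere (0 : Euc n) 1) ∧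
      (∀ x ∈ sphere (0 : Euc n) 1, 0 < f x) ∧ HasCurvFn K f

/-- `f` is a spherical harmonic of degree `k` on `S^{n-1}`: the restriction to the sphere of a
harmonic polynomial that is homogeneous of degree `k` (equivalently, an eigenfunction of the
Laplace–Beltrami operator with eigenvalue `-k(k+n-2)`; the zero function is allowed). -/
def IsSphHarm {n : ℕ} (k : ℕ) (f : Euc n → ℝ) : Prop :=
  ∃ P : MvPolynomial (Fin n) ℝ, P.IsHomogeneous k ∧
    (∑ i : Fin n, MvPolynomial.pderiv i (MvPolynomial.pderiv i P)) = 0 ∧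
    ∀ x ∈ sphere (0 : Euc n) 1, f x = MvPolynomial.eval (fun i => x i) P

/-- `π_k f = 0`: `f` is `L²(S^{n-1})`-orthogonal to all spherical harmonics of degree `k`. -/
def ProjZero {n : ℕ} (k : ℕ) (f : Euc n → ℝ) : Prop :=
  ∀ Y : Euc n → ℝ, IsSphHarm k Y →
    ∫ x in sphere (0 : Euc n) 1, f x * Y x ∂(sphMeas n) = 0

/-- The multipliers `v_{k,n}` of the spherical Radon transform:
`v_{k,n} = (1·3⋯(k-1)) / ((n-1)(n+1)⋯(n+k-3))` for even `k`, `v_{0,n} = 1`, and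
`v_{k,n} = 0` for odd `k`. -/
def vkn (n k : ℕ) : ℝ :=
  if k % 2 = 0 then ∏ i ∈ Finset.range (k / 2), (2 * (i : ℝ) + 1) / ((n : ℝ) + 2 * i - 1)
  else 0

/-- `D` is the derivative at `t = 0`, in the `C²(S^{n-1})`-norm, of a curve `t ↦ F t` of
functions on the sphere. -/
def HasC2DerivAt {n : ℕ} (F : ℝ → Euc n → ℝ) (D : Euc n → ℝ) : Prop :=
  Tendsto (fun t : ℝ => C2Norm (fun x => (F t x - F 0 x) / t - D x)) (𝓝[≠] (0 : ℝ)) (𝓝 0)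

/-! ### Uniqueness of the rotation-invariant measure on the sphere -/

section Uniqueness

variable {E : Type*} [NormedAddCommGroup E] [InnerProductSpace ℝ E] [FiniteDimensional ℝ E]
  [MeasurableSpace E] [BorelSpace E]

/-- The characteristic function of a rotation-invariant measure is radial: two vectors of the same
norm are exchanged by a reflection. -/
lemma charFun_eq_of_norm_eq {μ : Measure E} (hinv : ∀ R : E ≃ₗᵢ[ℝ] E, μ.map R = μ)
    {s t : E} (h : ‖s‖ = ‖t‖) : charFun μ s = charFun μ t := by
  let R : E ≃ₗᵢ[ℝ] E := Submodule.reflection (Submodule.span ℝ {s - t})ᗮ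
  have hR : R s = t := Submodule.reflection_sub h
  conv_lhs => rw [← hinv R.symm]
  rw [charFun_apply, charFun_apply, integral_map R.symm.continuous.aemeasurable (by fun_prop)]
  congr with x
  have : ⟪R.symm x, s⟫ = ⟪x, t⟫ := by
    rw [← hR, ← R.inner_map_map (R.symm x) s, R.apply_symm_apply]
  rw [this]

/-- Two finite rotation-invariant measures carried by the unit sphere are proportional.  Both sides
of the identity have the same characteristic function, by evaluating
`∫∫ exp (i r ⟪x, y⟫) dμ(x) dν(y)` in both orders. -/
lemma smul_eq_smul_of_invariant {μ ν : Measure E} [IsFiniteMeasure μ] [IsFiniteMeasure ν]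
    (hμ : ∀ R : E ≃ₗᵢ[ℝ] E, μ.map R = μ) (hν : ∀ R : E ≃ₗᵢ[ℝ] E, ν.map R = ν)
    (hμ1 : ∀ᵐ x ∂μ, ‖x‖ = 1) (hν1 : ∀ᵐ x ∂ν, ‖x‖ = 1) :
    ν univ • μ = μ univ • ν := by
  have : IsFiniteMeasure (ν univ • μ) := μ.smul_finite (measure_ne_top _ _)
  have : IsFiniteMeasure (μ univ • ν) := ν.smul_finite (measure_ne_top _ _)
  apply Measure.ext_of_charFun
  ext t
  have key : ∀ {α β : Measure E} [IsFiniteMeasure α] [IsFiniteMeasure β],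
      (∀ R : E ≃ₗᵢ[ℝ] E, α.map R = α) → (∀ᵐ x ∂β, ‖x‖ = 1) →
      ∫ y, ∫ x, Complex.exp ((‖t‖ * ⟪x, y⟫ : ℝ) * Complex.I) ∂α ∂β
        = (β univ).toReal * charFun α t := by
    intro α β _ _ hα hβ
    have : ∀ᵐ y ∂β, ∫ x, Complex.exp ((‖t‖ * ⟪x, y⟫ : ℝ) * Complex.I) ∂α = charFun α t := by
      filter_upwards [hβ] with y hy
      rw [← charFun_eq_of_norm_eq hα (s := ‖t‖ • y) (by simp [norm_smul, hy]), charFun_apply]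
      simp [inner_smul_right]
    rw [integral_congr_ae this]
    simp [Measure.real]
  have h1 := key (α := μ) (β := ν) hμ hν1
  have h2 := key (α := ν) (β := μ) hν hμ1
  rw [integral_integral_swap] at h1
  · simp only [real_inner_comm] at h1 h2
    rw [charFun_apply, charFun_apply, integral_smul_measure, integral_smul_measure,
      ← charFun_apply, ← charFun_apply, Complex.real_smul, Complex.real_smul, ← h1, ← h2]
  · refine Integrable.of_bound (C := 1) ?_ ?_
    · exact Continuous.aestronglyMeasurable (by simp only [Function.uncurry_def]; fun_prop)
    · refine ae_of_all _ fun p => ?_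
      simp only [Function.uncurry_def]
      rw [Complex.norm_exp_ofReal_mul_I]

end Uniqueness

/-! ### Finiteness and invariance of the spherical Hausdorff measure -/

section Finite

lemma norm_normalize_sub_le {E : Type*} [NormedAddCommGroup E] [NormedSpace ℝ E] {x y : E}
    (hx : 1 ≤ ‖x‖) (hy : 1 ≤ ‖y‖) : ‖‖x‖⁻¹ • x - ‖y‖⁻¹ • y‖ ≤ 2 * ‖x - y‖ := by
  have hx0 : 0 < ‖x‖ := by linarith
  have hy0 : 0 < ‖y‖ := by linarith
  have e : ‖x‖⁻¹ • x - ‖y‖⁻¹ • y = ‖x‖⁻¹ • (x - y) + (‖x‖⁻¹ - ‖y‖⁻¹) • y := by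
    module
  have h1 : ‖(‖x‖⁻¹ - ‖y‖⁻¹) • y‖ = ‖x‖⁻¹ * |‖y‖ - ‖x‖| := by
    rw [norm_smul, Real.norm_eq_abs, inv_sub_inv hx0.ne' hy0.ne', abs_div,
      abs_of_pos (mul_pos hx0 hy0)]
    field_simp
  have h2 : |‖y‖ - ‖x‖| ≤ ‖x - y‖ := by rw [norm_sub_rev]; exact abs_norm_sub_norm_le y x
  have h3 : ‖x‖⁻¹ ≤ 1 := inv_le_one_of_one_le₀ hx
  rw [e]
  refine (norm_add_le _ _).trans ?_
  rw [h1, norm_smul, norm_inv, norm_norm]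
  have := mul_le_mul h3 h2 (abs_nonneg _) zero_le_one
  have := mul_le_mul_of_nonneg_right h3 (norm_nonneg (x - y))
  linarith

/-- The face `{x | x i = σ}` of the cube, parametrized by the remaining coordinates and projected
radially to the unit sphere. -/
def faceMap (m : ℕ) (i : Fin (m + 1)) (σ : ℝ) (y : Fin m → ℝ) : Euc (m + 1) :=
  ‖WithLp.toLp 2 (i.insertNth σ y : Fin (m + 1) → ℝ)‖⁻¹ •
    WithLp.toLp 2 (i.insertNth σ y : Fin (m + 1) → ℝ)

lemma faceMap_lipschitz (m : ℕ) (i : Fin (m + 1)) {σ : ℝ} (hσ : |σ| = 1) :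
    LipschitzWith (2 * (NNReal.sqrt (m + 1))) (faceMap m i σ) := by
  apply LipschitzWith.of_dist_le_mul
  intro y z
  have h1 : ∀ y : Fin m → ℝ, 1 ≤ ‖WithLp.toLp 2 (i.insertNth σ y : Fin (m + 1) → ℝ)‖ := by
    intro y
    have := PiLp.norm_apply_le (WithLp.toLp 2 (i.insertNth σ y : Fin (m + 1) → ℝ)) i
    simpa [hσ] using this
  rw [dist_eq_norm, faceMap, faceMap]
  refine (norm_normalize_sub_le (h1 y) (h1 z)).trans ?_
  rw [NNReal.coe_mul, mul_assoc]
  refine mul_le_mul_of_nonneg_left ?_ (by norm_num)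
  rw [EuclideanSpace.norm_eq]
  have : ∑ j, ‖(WithLp.toLp 2 (i.insertNth σ y : Fin (m + 1) → ℝ)
      - WithLp.toLp 2 (i.insertNth σ z : Fin (m + 1) → ℝ)) j‖ ^ 2 ≤ (m + 1) * dist y z ^ 2 := by
    rw [show ((m : ℝ) + 1) * dist y z ^ 2 = ∑ j : Fin (m + 1), dist y z ^ 2 by simp]
    refine Finset.sum_le_sum fun j _ => ?_
    refine pow_le_pow_left₀ (norm_nonneg _) ?_ 2
    refine Fin.succAboveCases i ?_ (fun k => ?_) j
    · simp
    · simpa [Real.dist_eq] using dist_le_pi_dist y z k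
  refine (Real.sqrt_le_sqrt this).trans_eq ?_
  rw [Real.sqrt_mul (by positivity), Real.sqrt_sq dist_nonneg]
  simp

/-- The sphere is covered by Lipschitz images of the faces of the cube, whose Hausdorff measure is
Lebesgue measure. -/
lemma sphMeas_sphere_lt_top (m : ℕ) : sphMeas (m + 1) (sphere 0 1) < ∞ := by
  have cover : sphere (0 : Euc (m + 1)) 1 ⊆ ⋃ i : Fin (m + 1),
      (faceMap m i 1 '' closedBall 0 1 ∪ faceMap m i (-1) '' closedBall 0 1) := by
    intro x hx
    have hx1 : ‖x‖ = 1 := by simpa using hx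
    -- the face met by the ray through `x` belongs to a coordinate of maximal modulus
    obtain ⟨i, -, hi⟩ := Finset.exists_max_image Finset.univ (fun j => |x j|) ⟨0, by simp⟩
    have hxi : 0 < |x i| := by
      rcases (abs_nonneg (x i)).lt_or_eq with h | h
      · exact h
      · have : x = 0 := by
          ext j
          have := hi j (by simp)
          rw [← h] at this
          simpa using this
        simp [this] at hx1
    have main : ∀ σ : ℝ, σ * |x i| = x i → x ∈ faceMap m i σ '' closedBall 0 1 := by
      intro σ hσ
      refine ⟨fun k => |x i|⁻¹ * x (i.succAbove k), ?_, ?_⟩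
      · rw [mem_closedBall_zero_iff, pi_norm_le_iff_of_nonneg zero_le_one]
        intro k
        rw [norm_mul, norm_inv, Real.norm_eq_abs, Real.norm_eq_abs, abs_abs, inv_mul_le_one₀ hxi]
        exact hi _ (by simp)
      · have : WithLp.toLp 2 (i.insertNth σ (fun k => |x i|⁻¹ * x (i.succAbove k)) :
            Fin (m + 1) → ℝ) = |x i|⁻¹ • x := by
          ext j
          refine Fin.succAboveCases i ?_ (fun k => ?_) j
          · simp only [Fin.insertNth_apply_same, PiLp.smul_apply, smul_eq_mul]
            field_simp
            exact hσ
          · simp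
        rw [faceMap, this, norm_smul, hx1, norm_inv, Real.norm_eq_abs, abs_abs, mul_one, inv_inv,
          smul_smul, mul_inv_cancel₀ hxi.ne', one_smul]
    rw [mem_iUnion]
    refine ⟨i, ?_⟩
    rcases le_total 0 (x i) with h | h
    · exact Or.inl (main 1 (by rw [abs_of_nonneg h]; ring))
    · exact Or.inr (main (-1) (by rw [abs_of_nonpos h]; ring))
  have face : ∀ (i : Fin (m + 1)) (σ : ℝ), |σ| = 1 →
      sphMeas (m + 1) (faceMap m i σ '' closedBall 0 1) < ∞ := by
    intro i σ hσ
    rw [sphMeas, show (((m + 1 : ℕ) : ℝ) - 1) = (m : ℝ) by push_cast; ring]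
    refine ((faceMap_lipschitz m i hσ).hausdorffMeasure_image_le (Nat.cast_nonneg m) _).trans_lt ?_
    have : (Measure.hausdorffMeasure (m : ℝ) : Measure (Fin m → ℝ)) = volume := by
      simpa using (hausdorffMeasure_pi_real (ι := Fin m))
    rw [this]
    refine ENNReal.mul_lt_top (ENNReal.rpow_lt_top_of_nonneg (Nat.cast_nonneg m) ENNReal.coe_ne_top) ?_
    exact (isCompact_closedBall _ _).measure_lt_top
  refine (measure_mono cover).trans_lt ((measure_iUnion_le _).trans_lt ?_)
  rw [tsum_fintype, ENNReal.sum_lt_top]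
  intro i _
  refine (measure_union_le _ _).trans_lt (ENNReal.add_lt_top.2 ⟨?_, ?_⟩)
  · exact face i 1 (by simp)
  · exact face i (-1) (by simp)

lemma sphMeas_restrict_map (n : ℕ) (R : Euc n ≃ₗᵢ[ℝ] Euc n) :
    ((sphMeas n).restrict (sphere 0 1)).map R = (sphMeas n).restrict (sphere 0 1) := by
  have h := R.toIsometryEquiv.measurePreserving_hausdorffMeasure ((n : ℝ) - 1)
  have h2 := h.restrict_preimage (s := sphere (0 : Euc n) 1) isClosed_sphere.measurableSet
  have h3 : R.toIsometryEquiv ⁻¹' sphere (0 : Euc n) 1 = sphere 0 1 := by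
    ext x; simp
  rw [h3] at h2
  exact h2.map_eq

end Finite

/-! ### Slicing an integral along a direction -/

section Slicing

lemma exists_kernel : ∃ κ : ℝ → ℝ, Continuous κ ∧ (∀ r, 1 < |r| → κ r = 0) ∧ ∫ r, κ r = 1 ∧
    ∃ K : ℝ, 0 ≤ K ∧ ∀ r, |κ r| ≤ K := by
  let b : ContDiffBump (0 : ℝ) := ⟨1 / 2, 1, by norm_num, by norm_num⟩
  have hc : Continuous (b.normed volume) := b.continuous_normed
  obtain ⟨K, hK⟩ := hc.bounded_above_of_compact_support b.hasCompactSupport_normed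
  refine ⟨b.normed volume, hc, fun r hr => ?_, b.integral_normed, K,
    (norm_nonneg _).trans (hK 0), hK⟩
  have h : r ∉ Function.support (b.normed volume) := by
    rw [b.support_normed_eq]
    simpa [b] using hr.le
  simpa using h

variable {E : Type*} [NormedAddCommGroup E] [InnerProductSpace ℝ E]
  {G : Type*} [NormedAddCommGroup G] [NormedSpace ℝ G]

lemma norm_bounds_of_slice {e x : E} {t : ℝ} (he : ‖e‖ = 1) (h1 : |⟪x, e⟫| ≤ 1)
    (h2 : ‖x + t • e‖ ≤ 3) : ‖x‖ ≤ 7 ∧ |t| ≤ 4 := by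
  have a : ⟪x + t • e, e⟫ = ⟪x, e⟫ + t := by
    rw [inner_add_left, inner_smul_left, real_inner_self_eq_norm_sq, he]; simp
  have b : |⟪x, e⟫ + t| ≤ 3 := by
    rw [← a]
    have := abs_real_inner_le_norm (x + t • e) e
    rw [he] at this; linarith
  have c : |t| ≤ 4 := by
    rw [abs_le] at *; constructor <;> linarith
  refine ⟨?_, c⟩
  calc ‖x‖ = ‖(x + t • e) - t • e‖ := by congr 1; abel
    _ ≤ ‖x + t • e‖ + ‖t • e‖ := norm_sub_le _ _
    _ ≤ 3 + 4 := by
      refine add_le_add h2 ?_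
      rw [norm_smul, he, mul_one]; exact c
    _ = 7 := by norm_num

lemma integrable_of_bounded_of_compact {G : Type*} [NormedAddCommGroup G] {X : Type*} [TopologicalSpace X] [MeasurableSpace X]
    {μ : Measure X} [IsFiniteMeasureOnCompacts μ]
    {g : X → G} (hg : AEStronglyMeasurable g μ) {C : ℝ} (hC : ∀ x, ‖g x‖ ≤ C) {S : Set X}
    (hS : IsCompact S) (h0 : ∀ x, x ∉ S → g x = 0) : Integrable g μ := by
  rw [← integrableOn_iff_integrable_of_support_subset (s := S)]
  · exact Measure.integrableOn_of_bounded hS.measure_ne_top hg (ae_of_all _ hC)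
  · intro x hx
    by_contra h
    exact hx (h0 x h)

variable [CompleteSpace G] [FiniteDimensional ℝ E] [MeasurableSpace E] [BorelSpace E]

/-- Fubini along the lines parallel to `e`: averaging the translates of the integral with the weight
`κ` replaces the choice of a complementary hyperplane. -/
lemma integral_eq_slice {κ : ℝ → ℝ} (hκ : Continuous κ) (hκ0 : ∀ r, 1 < |r| → κ r = 0)
    (hκ1 : ∫ r, κ r = 1) {K : ℝ} (hK : ∀ r, |κ r| ≤ K) {e : E} (he : ‖e‖ = 1)
    {φ : E → G} (hφ : StronglyMeasurable φ) {C : ℝ} (hC : ∀ x, ‖φ x‖ ≤ C)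
    (h0 : ∀ x, 3 < ‖x‖ → φ x = 0) :
    Integrable (fun x => κ ⟪x, e⟫ • ∫ t : ℝ, φ (x + t • e)) ∧
      ∫ x, φ x = ∫ x, κ ⟪x, e⟫ • ∫ t : ℝ, φ (x + t • e) := by
  have hK0 : 0 ≤ K := (abs_nonneg _).trans (hK 0)
  have hC0 : 0 ≤ C := (norm_nonneg _).trans (hC 0)
  have i1 : Integrable (fun p : E × ℝ => κ ⟪p.1, e⟫ • φ (p.1 + p.2 • e))
      ((volume : Measure E).prod volume) := by
    refine integrable_of_bounded_of_compact (C := K * C) ?_ ?_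
      (S := closedBall (0 : E) 7 ×ˢ closedBall (0 : ℝ) 4)
      ((isCompact_closedBall _ _).prod (isCompact_closedBall _ _)) ?_
    · refine AEStronglyMeasurable.smul (Continuous.aestronglyMeasurable (by fun_prop)) ?_
      exact (hφ.comp_measurable (by fun_prop)).aestronglyMeasurable
    · intro p
      rw [norm_smul]
      exact mul_le_mul (hK _) (hC _) (norm_nonneg _) hK0
    · intro p hp
      by_contra hne
      rw [smul_eq_zero, not_or] at hne
      have a1 : |⟪p.1, e⟫| ≤ 1 := by
        by_contra h; exact hne.1 (hκ0 _ (not_le.1 h))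
      have a2 : ‖p.1 + p.2 • e‖ ≤ 3 := by
        by_contra h; exact hne.2 (h0 _ (not_le.1 h))
      have := norm_bounds_of_slice he a1 a2
      exact hp ⟨by simpa using this.1, by simpa using this.2⟩
  have i2 : Integrable (fun p : ℝ × E => κ (⟪p.2, e⟫ - p.1) • φ p.2)
      ((volume : Measure ℝ).prod volume) := by
    refine integrable_of_bounded_of_compact (C := K * C) ?_ ?_
      (S := closedBall (0 : ℝ) 4 ×ˢ closedBall (0 : E) 3)
      ((isCompact_closedBall _ _).prod (isCompact_closedBall _ _)) ?_
    · refine AEStronglyMeasurable.smul (Continuous.aestronglyMeasurable (by fun_prop)) ?_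
      exact (hφ.comp_measurable (by fun_prop)).aestronglyMeasurable
    · intro p
      rw [norm_smul]
      exact mul_le_mul (hK _) (hC _) (norm_nonneg _) hK0
    · intro p hp
      by_contra hne
      rw [smul_eq_zero, not_or] at hne
      have a1 : |⟪p.2, e⟫ - p.1| ≤ 1 := by
        by_contra h; exact hne.1 (hκ0 _ (not_le.1 h))
      have a2 : ‖p.2‖ ≤ 3 := by
        by_contra h; exact hne.2 (h0 _ (not_le.1 h))
      have a3 := abs_real_inner_le_norm p.2 e
      rw [he, mul_one] at a3
      refine hp ⟨?_, by simpa using a2⟩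
      have a4 := a3.trans a2
      simp only [mem_closedBall, dist_zero_right, Real.norm_eq_abs]
      rw [abs_le] at *
      constructor <;> linarith
  simp_rw [← integral_smul]
  refine ⟨i1.integral_prod_left, ?_⟩
  rw [integral_integral_swap i1]
  have step : ∀ t : ℝ, ∫ x : E, κ ⟪x, e⟫ • φ (x + t • e) = ∫ x : E, κ (⟪x, e⟫ - t) • φ x := by
    intro t
    rw [← integral_add_right_eq_self (fun x : E => κ (⟪x, e⟫ - t) • φ x) (t • e)]
    congr with x
    rw [inner_add_left, inner_smul_left, real_inner_self_eq_norm_sq, he]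
    simp
  simp_rw [step]
  rw [integral_integral_swap i2]
  congr with x
  rw [integral_smul_const, integral_sub_left_eq_self κ volume, hκ1, one_smul]

end Slicing

/-! ### One-dimensional integrals against a sign -/

section SignTransform

/-- The sign of a real number, with value `-1` at `0`. -/
def sg (r : ℝ) : ℝ := if 0 < r then 1 else -1

lemma measurable_sg : Measurable sg :=
  Measurable.ite measurableSet_Ioi measurable_const measurable_const

lemma norm_sg (r : ℝ) : ‖sg r‖ = 1 := by
  unfold sg; split_ifs <;> simp

lemma sg_mul {c : ℝ} (hc : 0 < c) (r : ℝ) : sg (c * r) = sg r := by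
  simp [sg, hc]

lemma hasDerivAt_abs_sg {r : ℝ} (hr : r ≠ 0) : HasDerivAt (fun x : ℝ => |x|) (sg r) r := by
  rcases hr.lt_or_gt with h | h
  · simpa [sg, not_lt.2 h.le] using hasDerivAt_abs_neg h
  · simpa [sg, h] using hasDerivAt_abs_pos h

/-- Moving the jump of the sign past `s` changes the integral at rate `-2 ψ s`. -/
lemma hasDerivAt_integral_sg {G : Type*} [NormedAddCommGroup G] [NormedSpace ℝ G] [CompleteSpace G]
    {ψ : ℝ → G} (hψ : Continuous ψ) (hi : Integrable ψ) (s : ℝ) :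
    HasDerivAt (fun s => ∫ t, sg (t - s) • ψ t) ((-2 : ℝ) • ψ s) s := by
  have e : (fun s => ∫ t, sg (t - s) • ψ t) =
      fun s => ((∫ t, ψ t) - (2 : ℝ) • ∫ t in Iic 0, ψ t) - (2 : ℝ) • ∫ t in (0 : ℝ)..s, ψ t := by
    funext s
    have h1 : ∀ t, sg (t - s) • ψ t = ψ t - (2 : ℝ) • (Iic s).indicator ψ t := by
      intro t
      by_cases h : t ≤ s
      · have : sg (t - s) = -1 := by simp [sg, h]
        rw [indicator_of_mem (by exact h), this]
        module
      · have : sg (t - s) = 1 := by simp [sg, not_le.1 h]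
        rw [indicator_of_notMem (by exact h), this]
        simp
    simp_rw [h1]
    have h2 : Integrable fun t => (2 : ℝ) • (Iic s).indicator ψ t :=
      (hi.indicator measurableSet_Iic).smul _
    rw [integral_sub hi h2, integral_smul,
      integral_indicator measurableSet_Iic,
      ← intervalIntegral.integral_Iic_sub_Iic hi.integrableOn hi.integrableOn]
    module
  rw [e]
  have := (intervalIntegral.integral_hasDerivAt_right (hψ.intervalIntegrable 0 s)
    (hψ.stronglyMeasurableAtFilter _ _) hψ.continuousAt)
  simpa using (this.const_smul (2 : ℝ)).const_sub ((∫ t, ψ t) - (2 : ℝ) • ∫ t in Iic 0, ψ t)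

end SignTransform

/-! ### Regularity of the transform of a compactly supported density -/

section Regularity

variable {E : Type*} [NormedAddCommGroup E] [InnerProductSpace ℝ E]

/-- The parameter at which the line `t ↦ x + t • e` meets the hyperplane orthogonal to `u`. -/
def hitTime (e u x : E) : ℝ := -(⟪u, x⟫ / ⟪u, e⟫)

/-- The derivative of `hitTime e u x` in the variable `u`. -/
def hitTimeDeriv (e u x : E) : E →L[ℝ] ℝ :=
  (⟪u, x⟫ / ⟪u, e⟫ ^ 2) • innerSL ℝ e - ⟪u, e⟫⁻¹ • innerSL ℝ x

lemma hasFDerivAt_hitTime {e u : E} (hu : 0 < ⟪u, e⟫) (x : E) :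
    HasFDerivAt (fun u => hitTime e u x) (hitTimeDeriv e u x) u := by
  have h : ∀ y : E, HasFDerivAt (fun u : E => ⟪u, y⟫) (innerSL ℝ y) u := by
    intro y
    have := (innerSL ℝ y).hasFDerivAt (x := u)
    refine this.congr_of_eventuallyEq (Eventually.of_forall fun v => ?_)
    simp [real_inner_comm]
  have h2 := ((h x).mul ((hasDerivAt_inv hu.ne').comp_hasFDerivAt u (h e))).neg
  refine h2.congr_fderiv ?_
  ext v
  simp [hitTimeDeriv]
  ring

variable {G : Type*} [NormedAddCommGroup G] [NormedSpace ℝ G]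

/-- The density, with respect to `x`, of the derivative at `u` of `u ↦ ∫ sg ⟪u, x⟫ • k x`
after slicing along `e`. -/
def derivDensity (κ : ℝ → ℝ) (k : E → G) (e u x : E) : E →L[ℝ] G :=
  κ ⟪x, e⟫ • (hitTimeDeriv e u x).smulRight ((-2 : ℝ) • k (x + hitTime e u x • e))

lemma derivDensity_eq_zero {κ : ℝ → ℝ} (hκ0 : ∀ r, 1 < |r| → κ r = 0) {k : E → G}
    (h0 : ∀ x, 3 < ‖x‖ → k x = 0) {e : E} (he : ‖e‖ = 1) (u : E) {x : E}
    (hx : x ∉ closedBall (0 : E) 7) : derivDensity κ k e u x = 0 := by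
  by_contra hne
  have a1 : |⟪x, e⟫| ≤ 1 := by
    by_contra h
    exact hne (by simp [derivDensity, hκ0 _ (not_le.1 h)])
  have a2 : ‖x + hitTime e u x • e‖ ≤ 3 := by
    by_contra h
    refine hne ?_
    ext v
    simp [derivDensity, h0 _ (not_le.1 h)]
  exact hx (by simpa using (norm_bounds_of_slice he a1 a2).1)

lemma continuousOn_derivDensity {κ : ℝ → ℝ} (hκ : Continuous κ) {k : E → G} (hk : Continuous k)
    (e : E) : ContinuousOn (Function.uncurry (derivDensity κ k e))
      ({u | 0 < ⟪u, e⟫} ×ˢ univ) := by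
  have hne : ∀ p ∈ {u : E | 0 < ⟪u, e⟫} ×ˢ (univ : Set E), ⟪p.1, e⟫ ≠ 0 := fun p hp =>
    (show 0 < ⟪p.1, e⟫ from hp.1).ne'
  have hs : ContinuousOn (fun p : E × E => hitTime e p.1 p.2)
      ({u | 0 < ⟪u, e⟫} ×ˢ univ) := by
    unfold hitTime
    exact (ContinuousOn.div (by fun_prop) (by fun_prop) hne).neg
  have hs' : ContinuousOn (fun p : E × E => hitTimeDeriv e p.1 p.2)
      ({u | 0 < ⟪u, e⟫} ×ˢ univ) := by
    unfold hitTimeDeriv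
    exact ((ContinuousOn.div (by fun_prop) (by fun_prop)
      fun p hp => pow_ne_zero 2 (hne p hp)).smul continuousOn_const).sub
      ((ContinuousOn.inv₀ (by fun_prop) hne).smul (by fun_prop))
  have h3 : ContinuousOn (fun p : E × E => (-2 : ℝ) • k (p.2 + hitTime e p.1 p.2 • e))
      ({u | 0 < ⟪u, e⟫} ×ˢ univ) :=
    (hk.comp_continuousOn (continuousOn_snd.add (hs.smul continuousOn_const))).const_smul _
  have h4 : ContinuousOn (fun p : E × E => κ ⟪p.2, e⟫) ({u | 0 < ⟪u, e⟫} ×ˢ univ) := by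
    fun_prop
  refine h4.smul ?_
  exact ((ContinuousLinearMap.smulRightL ℝ E G).continuous.comp_continuousOn hs').clm_apply h3

variable [CompleteSpace G] [FiniteDimensional ℝ E] [MeasurableSpace E] [BorelSpace E]

/-- On the half-space `0 < ⟪u, e⟫`, slicing along `e` moves the dependence on `u` from the jump of
the sign into the upper limit `hitTime e u x` of a one-dimensional integral, which is differentiable
although `k` is merely continuous. -/
lemma hasFDerivAt_integral_sg_inner {κ : ℝ → ℝ} (hκ : Continuous κ)
    (hκ0 : ∀ r, 1 < |r| → κ r = 0) (hκ1 : ∫ r, κ r = 1) {K : ℝ} (hK : ∀ r, |κ r| ≤ K)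
    {k : E → G} (hk : Continuous k) (h0 : ∀ x, 3 < ‖x‖ → k x = 0)
    {e : E} (he : ‖e‖ = 1) {u₀ : E} (hu₀ : 0 < ⟪u₀, e⟫) :
    HasFDerivAt (fun u => ∫ x, sg ⟪u, x⟫ • k x) (∫ x, derivDensity κ k e u₀ x) u₀ := by
  have hU : IsOpen {u : E | 0 < ⟪u, e⟫} := isOpen_lt continuous_const (by fun_prop)
  have hcs : HasCompactSupport k := by
    refine HasCompactSupport.intro (isCompact_closedBall (0 : E) 3) fun x hx => h0 x ?_
    simpa using hx
  obtain ⟨C, hC⟩ := hk.bounded_above_of_compact_support hcs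
  have slice : ∀ u : E, 0 < ⟪u, e⟫ →
      Integrable (fun x => κ ⟪x, e⟫ • ∫ t : ℝ, sg (t - hitTime e u x) • k (x + t • e)) ∧
      ∫ x, sg ⟪u, x⟫ • k x
        = ∫ x, κ ⟪x, e⟫ • ∫ t : ℝ, sg (t - hitTime e u x) • k (x + t • e) := by
    intro u hu
    have hm : StronglyMeasurable fun x => sg ⟪u, x⟫ • k x :=
      (measurable_sg.comp (by fun_prop)).stronglyMeasurable.smul hk.stronglyMeasurable
    have hb : ∀ x, ‖sg ⟪u, x⟫ • k x‖ ≤ C := fun x => by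
      rw [norm_smul, norm_sg, one_mul]; exact hC x
    have := integral_eq_slice hκ hκ0 hκ1 hK he hm hb (fun x hx => by rw [h0 x hx, smul_zero])
    have e1 : ∀ (x : E) (t : ℝ), sg ⟪u, x + t • e⟫ = sg (t - hitTime e u x) := by
      intro x t
      rw [← sg_mul hu (t - hitTime e u x)]
      congr 1
      rw [inner_add_right, inner_smul_right, hitTime]
      field_simp
      ring
    simpa only [e1] using this
  obtain ⟨r, hr, hrU⟩ := Metric.nhds_basis_closedBall.mem_iff.1 (hU.mem_nhds hu₀)
  have hcont := continuousOn_derivDensity hκ hk e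
  obtain ⟨B, hB⟩ := ((isCompact_closedBall u₀ r).prod
    (isCompact_closedBall (0 : E) 7)).exists_bound_of_continuousOn
    (hcont.mono (prod_mono hrU (subset_univ _)))
  have main : HasFDerivAt
      (fun u => ∫ x, κ ⟪x, e⟫ • ∫ t : ℝ, sg (t - hitTime e u x) • k (x + t • e))
      (∫ x, derivDensity κ k e u₀ x) u₀ := by
    refine hasFDerivAt_integral_of_dominated_of_fderiv_le (closedBall_mem_nhds u₀ hr)
      (bound := (closedBall (0 : E) 7).indicator fun _ => B) ?_ (slice u₀ hu₀).1 ?_ ?_ ?_ ?_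
    · filter_upwards [hU.mem_nhds hu₀] with u hu using (slice u hu).1.aestronglyMeasurable
    · have : SecondCountableTopologyEither E (E →L[ℝ] G) :=
        secondCountableTopologyEither_of_left _ _
      refine Continuous.aestronglyMeasurable ?_
      have : Continuous fun x : E => (u₀, x) := by fun_prop
      exact hcont.comp_continuous this fun x => ⟨hu₀, mem_univ _⟩
    · refine ae_of_all _ fun x u hu => ?_
      by_cases hx : x ∈ closedBall (0 : E) 7
      · rw [indicator_of_mem hx]
        exact hB (u, x) ⟨hu, hx⟩
      · rw [indicator_of_notMem hx, derivDensity_eq_zero hκ0 h0 he u hx, norm_zero]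
    · exact (integrable_indicator_iff isClosed_closedBall.measurableSet).2
        (integrableOn_const (isCompact_closedBall _ _).measure_ne_top)
    · refine ae_of_all _ fun x u hu => ?_
      have c : Continuous fun t : ℝ => k (x + t • e) := by fun_prop
      have hi : Integrable fun t : ℝ => k (x + t • e) := by
        refine integrable_of_bounded_of_compact c.aestronglyMeasurable (fun t => hC _)
          (isCompact_closedBall (0 : ℝ) (3 + ‖x‖)) fun t ht => h0 _ ?_
        have ht' : 3 + ‖x‖ < |t| := by simpa using ht
        have := norm_sub_le (x + t • e) x
        rw [add_sub_cancel_left, norm_smul, he, Real.norm_eq_abs] at this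
        linarith
      have d := (hasDerivAt_integral_sg c hi (hitTime e u x)).hasFDerivAt.comp u
        (hasFDerivAt_hitTime (hrU hu) x)
      refine (d.const_smul (κ ⟪x, e⟫)).congr_fderiv ?_
      ext v
      simp [derivDensity]
  refine main.congr_of_eventuallyEq ?_
  filter_upwards [hU.mem_nhds hu₀] with u hu using (slice u hu).2

lemma contDiffOn_integral_sg_inner {k : E → G} (hk : Continuous k)
    (h0 : ∀ x, 3 < ‖x‖ → k x = 0) :
    ContDiffOn ℝ 1 (fun u => ∫ x, sg ⟪u, x⟫ • k x) {(0 : E)}ᶜ := by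
  obtain ⟨κ, hκ, hκ0, hκ1, K, -, hK⟩ := exists_kernel
  intro u₀ hu₀
  have hu₀' : 0 < ‖u₀‖ := norm_pos_iff.2 hu₀
  let e : E := ‖u₀‖⁻¹ • u₀
  have he : ‖e‖ = 1 := by
    simp only [e]
    rw [norm_smul, norm_inv, norm_norm, inv_mul_cancel₀ hu₀'.ne']
  have hue : 0 < ⟪u₀, e⟫ := by
    simp only [e]
    rw [inner_smul_right, real_inner_self_eq_norm_sq]
    positivity
  have hU : IsOpen {u : E | 0 < ⟪u, e⟫} := isOpen_lt continuous_const (by fun_prop)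
  have hder : ∀ u ∈ {u : E | 0 < ⟪u, e⟫}, HasFDerivAt (fun u => ∫ x, sg ⟪u, x⟫ • k x)
      (∫ x, derivDensity κ k e u x) u := fun u hu =>
    hasFDerivAt_integral_sg_inner hκ hκ0 hκ1 hK hk h0 he hu
  have hc : ContinuousOn (fun u => ∫ x, derivDensity κ k e u x) {u : E | 0 < ⟪u, e⟫} :=
    continuousOn_integral_of_compact_support (isCompact_closedBall (0 : E) 7)
      (continuousOn_derivDensity hκ hk e)
      fun u x _ hx => derivDensity_eq_zero hκ0 h0 he u hx
  have h1 : ContDiffOn ℝ 1 (fun u => ∫ x, sg ⟪u, x⟫ • k x) {u : E | 0 < ⟪u, e⟫} := by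
    rw [show (1 : WithTop ℕ∞) = 0 + 1 by simp, contDiffOn_succ_iff_fderiv_of_isOpen hU]
    refine ⟨fun u hu => (hder u hu).differentiableAt.differentiableWithinAt, by simp, ?_⟩
    rw [contDiffOn_zero]
    exact hc.congr fun u hu => (hder u hu).fderiv
  exact (h1.contDiffAt (hU.mem_nhds hue)).contDiffWithinAt

/-- The bound on the derivative is uniform on the unit sphere, since at a unit vector `u` one may
slice along `e = u`. -/
lemma exists_norm_fderiv_integral_sg_inner_le (E : Type*) [NormedAddCommGroup E]
    [InnerProductSpace ℝ E] [FiniteDimensional ℝ E] [MeasurableSpace E] [BorelSpace E]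
    (G : Type*) [NormedAddCommGroup G] [NormedSpace ℝ G] [CompleteSpace G] :
    ∃ c : ℝ, 0 ≤ c ∧ ∀ (k : E → G) (M : ℝ), Continuous k → (∀ x, 3 < ‖x‖ → k x = 0) →
      (∀ x, ‖k x‖ ≤ M) → ∀ u : E, ‖u‖ = 1 →
        ‖fderiv ℝ (fun u => ∫ x, sg ⟪u, x⟫ • k x) u‖ ≤ c * M := by
  obtain ⟨κ, hκ, hκ0, hκ1, K, hK0, hK⟩ := exists_kernel
  refine ⟨K * 28 * volume.real (closedBall (0 : E) 7), by positivity, ?_⟩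
  intro k M hk h0 hM u hu
  have hM0 : 0 ≤ M := (norm_nonneg _).trans (hM 0)
  have huu : ⟪u, u⟫ = 1 := by rw [real_inner_self_eq_norm_sq, hu]; norm_num
  rw [(hasFDerivAt_integral_sg_inner hκ hκ0 hκ1 hK hk h0 hu (u₀ := u)
    (by rw [huu]; norm_num)).fderiv]
  rw [← setIntegral_eq_integral_of_forall_compl_eq_zero (s := closedBall (0 : E) 7)
    (fun x hx => derivDensity_eq_zero hκ0 h0 hu u hx)]
  refine (norm_setIntegral_le_of_norm_le_const (C := K * (14 * (2 * M)))
    (isCompact_closedBall _ _).measure_lt_top fun x hx => ?_).trans_eq (by ring)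
  have hx7 : ‖x‖ ≤ 7 := by simpa using hx
  rw [derivDensity, norm_smul, ContinuousLinearMap.norm_smulRight_apply, norm_smul]
  have b1 : ‖hitTimeDeriv u u x‖ ≤ 14 := by
    rw [hitTimeDeriv, huu]
    refine (norm_sub_le _ _).trans ?_
    rw [norm_smul, norm_smul, innerSL_apply_norm, innerSL_apply_norm, hu]
    have := abs_real_inner_le_norm u x
    rw [hu] at this
    norm_num
    linarith
  have b2 : ‖(-2 : ℝ)‖ * ‖k (x + hitTime u u x • u)‖ ≤ 2 * M := by
    rw [norm_neg, Real.norm_ofNat]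
    exact mul_le_mul_of_nonneg_left (hM _) zero_le_two
  exact mul_le_mul (hK _) (mul_le_mul b1 b2 (by positivity) (by norm_num)) (by positivity) hK0

/-- The Euclidean analogue of the cosine transform, for the density `h`. -/
def absT (h : E → ℝ) (u : E) : ℝ := ∫ x, |⟪u, x⟫| * h x

lemma hasFDerivAt_absT {h : E → ℝ} (hh : Continuous h) (h0 : ∀ x, 3 < ‖x‖ → h x = 0)
    {u : E} (hu : u ≠ 0) :
    HasFDerivAt (absT h) (∫ x, sg ⟪u, x⟫ • (h x • innerSL ℝ x)) u := by
  have hcs : HasCompactSupport h := by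
    refine HasCompactSupport.intro (isCompact_closedBall (0 : E) 3) fun x hx => h0 x ?_
    simpa using hx
  have hae : ∀ᵐ x : E, ⟪u, x⟫ ≠ 0 := by
    have hne : (innerSL ℝ u).ker ≠ ⊤ := by
      intro htop
      have : u ∈ (innerSL ℝ u).ker := by rw [htop]; trivial
      simp at this
      exact hu this
    have := Measure.addHaar_submodule (volume : Measure E) _ hne
    rw [measure_eq_zero_iff_ae_notMem] at this
    filter_upwards [this] with x hx
    simpa using hx
  refine (hasFDerivAt_integral_of_dominated_loc_of_lip' (s := univ) univ_mem
    (bound := fun x => ‖x‖ * |h x|) ?_ ?_ ?_ ?_ ?_ ?_).2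
  · intro v _
    exact Continuous.aestronglyMeasurable (by fun_prop)
  · exact Continuous.integrable_of_hasCompactSupport (by fun_prop) hcs.mul_left
  · have c : Continuous fun x : E => h x • innerSL ℝ x := by fun_prop
    have c' : Measurable fun x : E => sg ⟪u, x⟫ := measurable_sg.comp (by fun_prop)
    exact c'.aestronglyMeasurable.smul c.aestronglyMeasurable
  · refine ae_of_all _ fun x v _ => ?_
    rw [← sub_mul, norm_mul, Real.norm_eq_abs, Real.norm_eq_abs]
    have a := abs_abs_sub_abs_le_abs_sub ⟪v, x⟫ ⟪u, x⟫
    rw [← inner_sub_left] at a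
    have b := a.trans (abs_real_inner_le_norm (v - u) x)
    calc _ ≤ ‖v - u‖ * ‖x‖ * |h x| := mul_le_mul_of_nonneg_right b (abs_nonneg _)
      _ = _ := by ring
  · exact Continuous.integrable_of_hasCompactSupport (by fun_prop)
      (HasCompactSupport.mul_left (hcs.comp_left (g := fun r : ℝ => |r|) (by simp)))
  · filter_upwards [hae] with x hx
    have d1 : HasFDerivAt (fun u : E => ⟪u, x⟫) (innerSL ℝ x) u := by
      refine ((innerSL ℝ x).hasFDerivAt (x := u)).congr_of_eventuallyEq
        (Eventually.of_forall fun v => ?_)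
      simp [real_inner_comm]
    have d2 := ((hasDerivAt_abs_sg hx).hasFDerivAt.comp u d1).mul_const (h x)
    refine d2.congr_fderiv ?_
    ext v
    simp
    ring

lemma contDiffOn_absT {h : E → ℝ} (hh : Continuous h) (h0 : ∀ x, 3 < ‖x‖ → h x = 0) :
    ContDiffOn ℝ 2 (absT h) {(0 : E)}ᶜ := by
  have ho : IsOpen ({(0 : E)}ᶜ : Set E) := isOpen_compl_singleton
  rw [show (2 : WithTop ℕ∞) = 1 + 1 by norm_num, contDiffOn_succ_iff_fderiv_of_isOpen ho]
  refine ⟨fun u hu => (hasFDerivAt_absT hh h0 hu).differentiableAt.differentiableWithinAt,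
    by simp, ?_⟩
  refine (contDiffOn_integral_sg_inner (k := fun x => h x • innerSL ℝ x) (by fun_prop)
    (fun x hx => by simp [h0 x hx])).congr fun u hu => ?_
  exact (hasFDerivAt_absT hh h0 hu).fderiv

lemma exists_absT_bound (E : Type*) [NormedAddCommGroup E]
    [InnerProductSpace ℝ E] [FiniteDimensional ℝ E] [MeasurableSpace E] [BorelSpace E] :
    ∃ c : ℝ, 0 ≤ c ∧ ∀ (h : E → ℝ) (M : ℝ), Continuous h → (∀ x, 3 < ‖x‖ → h x = 0) →
      (∀ x, |h x| ≤ M) → ∀ u : E, ‖u‖ = 1 →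
        |absT h u| + ‖fderiv ℝ (absT h) u‖ + ‖iteratedFDeriv ℝ 2 (absT h) u‖ ≤ c * M := by
  obtain ⟨c, hc, H⟩ := exists_norm_fderiv_integral_sg_inner_le E (E →L[ℝ] ℝ)
  set V := volume.real (closedBall (0 : E) 3)
  refine ⟨3 * V + 3 * V + c * 3, by positivity, ?_⟩
  intro h M hh h0 hM u hu
  have hM0 : 0 ≤ M := (abs_nonneg _).trans (hM 0)
  have hu0 : u ≠ 0 := by
    rintro rfl
    simp at hu
  have hk : ∀ x : E, ‖h x • innerSL ℝ x‖ ≤ M * 3 := by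
    intro x
    rw [norm_smul, innerSL_apply_norm]
    by_cases hx : ‖x‖ ≤ 3
    · exact mul_le_mul (hM x) hx (norm_nonneg _) hM0
    · rw [h0 x (not_le.1 hx), norm_zero, zero_mul]
      positivity
  have b1 : |absT h u| ≤ M * 3 * V := by
    rw [← Real.norm_eq_abs, absT, ← setIntegral_eq_integral_of_forall_compl_eq_zero (s := closedBall (0 : E) 3)
      (fun x hx => by rw [h0 x (by simpa using hx), mul_zero])]
    refine norm_setIntegral_le_of_norm_le_const
      (isCompact_closedBall (0 : E) 3).measure_lt_top fun x hx => ?_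
    refine le_trans ?_ (hk x)
    rw [norm_smul, innerSL_apply_norm, norm_mul, mul_comm, Real.norm_eq_abs, Real.norm_eq_abs,
      abs_abs]
    refine mul_le_mul_of_nonneg_left ?_ (abs_nonneg _)
    simpa [hu] using abs_real_inner_le_norm u x
  have b2 : ‖fderiv ℝ (absT h) u‖ ≤ M * 3 * V := by
    have hz : ∀ x ∉ closedBall (0 : E) 3, sg ⟪u, x⟫ • (h x • innerSL ℝ x) = 0 := by
      intro x hx
      rw [h0 x (by simpa using hx), zero_smul, smul_zero]
    rw [(hasFDerivAt_absT hh h0 hu0).fderiv, ← setIntegral_eq_integral_of_forall_compl_eq_zero hz]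
    refine norm_setIntegral_le_of_norm_le_const
      (isCompact_closedBall (0 : E) 3).measure_lt_top fun x hx => ?_
    rw [norm_smul, norm_sg, one_mul]
    exact hk x
  have b3 : ‖iteratedFDeriv ℝ 2 (absT h) u‖ ≤ c * (M * 3) := by
    rw [← norm_iteratedFDeriv_fderiv (n := 1), norm_iteratedFDeriv_one]
    have hev : fderiv ℝ (absT h) =ᶠ[𝓝 u] fun u => ∫ x, sg ⟪u, x⟫ • (h x • innerSL ℝ x) := by
      filter_upwards [isOpen_compl_singleton.mem_nhds (show u ∈ ({(0 : E)}ᶜ : Set E) from hu0)]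
        with v hv using (hasFDerivAt_absT hh h0 hv).fderiv
    rw [hev.fderiv_eq]
    exact H _ _ (by fun_prop) (fun x hx => by simp [h0 x hx]) hk u hu
  calc _ ≤ M * 3 * V + M * 3 * V + c * (M * 3) := add_le_add (add_le_add b1 b2) b3
    _ = _ := by ring

end Regularity

/-! ### From the sphere to Euclidean space -/

section Sphere

/-- A radial weight supported in the shell `1 ≤ r ≤ 3`. -/
def shell (r : ℝ) : ℝ := max 0 (1 - |r - 2|)

lemma continuous_shell : Continuous shell := by unfold shell; fun_prop

lemma shell_nonneg (r : ℝ) : 0 ≤ shell r := le_max_left _ _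

lemma shell_le_one (r : ℝ) : shell r ≤ 1 :=
  max_le zero_le_one (by linarith [abs_nonneg (r - 2)])

lemma shell_eq_zero_of_le {r : ℝ} (h : r ≤ 1) : shell r = 0 :=
  max_eq_left (by rw [abs_of_nonpos (by linarith)]; linarith)

lemma shell_eq_zero_of_ge {r : ℝ} (h : 3 ≤ r) : shell r = 0 :=
  max_eq_left (by rw [abs_of_nonneg (by linarith)]; linarith)

/-- Lebesgue measure weighted by `shell ‖x‖`. -/
def shellMeas (n : ℕ) : Measure (Euc n) :=
  (volume : Measure (Euc n)).withDensity fun x => ENNReal.ofReal (shell ‖x‖)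

lemma measurable_shellDensity (n : ℕ) :
    Measurable fun x : Euc n => ENNReal.ofReal (shell ‖x‖) :=
  (continuous_shell.comp continuous_norm).measurable.ennreal_ofReal

lemma integrable_shell (n : ℕ) : Integrable fun x : Euc n => shell ‖x‖ := by
  refine (continuous_shell.comp continuous_norm).integrable_of_hasCompactSupport
    (HasCompactSupport.intro (isCompact_closedBall (0 : Euc n) 3) fun x hx => ?_)
  have : 3 < ‖x‖ := by simpa using hx
  exact shell_eq_zero_of_ge this.le

instance isFiniteMeasure_shellMeas (n : ℕ) : IsFiniteMeasure (shellMeas n) :=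
  isFiniteMeasure_withDensity_ofReal (integrable_shell n).2

lemma shellMeas_univ_ne_zero (m : ℕ) : shellMeas (m + 1) univ ≠ 0 := by
  rw [shellMeas, withDensity_apply _ MeasurableSet.univ, Measure.restrict_univ, Ne,
    lintegral_eq_zero_iff (measurable_shellDensity _)]
  intro h
  have hc : Continuous fun x : Euc (m + 1) => ENNReal.ofReal (shell ‖x‖) :=
    ENNReal.continuous_ofReal.comp (continuous_shell.comp continuous_norm)
  have h2 := (hc.ae_eq_iff_eq volume continuous_zero).1 h
  have := congrFun h2 (EuclideanSpace.single 0 2)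
  simp [shell] at this

lemma shellMeas_map (n : ℕ) (R : Euc n ≃ₗᵢ[ℝ] Euc n) : (shellMeas n).map R = shellMeas n := by
  ext s hs
  have hR := R.measurePreserving
  rw [Measure.map_apply R.continuous.measurable hs, shellMeas,
    withDensity_apply _ (R.continuous.measurable hs), withDensity_apply _ hs,
    ← hR.setLIntegral_comp_preimage hs (measurable_shellDensity n)]
  simp

lemma measurable_normalize (n : ℕ) : Measurable fun x : Euc n => ‖x‖⁻¹ • x := by fun_prop

/-- The spherical Lebesgue measure is, up to a factor, the radial projection of `shellMeas`. -/
lemma exists_sphMeas_eq (m : ℕ) : ∃ a : ℝ≥0∞, a ≠ ∞ ∧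
    (sphMeas (m + 1)).restrict (sphere 0 1) =
      a • (shellMeas (m + 1)).map fun x => ‖x‖⁻¹ • x := by
  set μ := (sphMeas (m + 1)).restrict (sphere 0 1)
  set ν := (shellMeas (m + 1)).map fun x => ‖x‖⁻¹ • x with hν
  have : IsFiniteMeasure μ := ⟨by
    rw [Measure.restrict_apply_univ]; exact sphMeas_sphere_lt_top m⟩
  have : IsFiniteMeasure ν := Measure.isFiniteMeasure_map _ _
  have hN := measurable_normalize (m + 1)
  have hν0 : ν univ ≠ 0 := by
    rw [hν, Measure.map_apply hN MeasurableSet.univ, preimage_univ]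
    exact shellMeas_univ_ne_zero m
  have h := smul_eq_smul_of_invariant (μ := μ) (ν := ν)
    (fun R => sphMeas_restrict_map (m + 1) R)
    (fun R => by
      rw [hν, Measure.map_map R.continuous.measurable hN]
      conv_rhs => rw [← shellMeas_map (m + 1) R, Measure.map_map hN R.continuous.measurable]
      congr 1
      funext x
      simp)
    (by
      filter_upwards [ae_restrict_mem isClosed_sphere.measurableSet] with x hx
      simpa using hx)
    (by
      rw [hν, ae_map_iff hN.aemeasurable (measurableSet_eq_fun (by fun_prop) (by fun_prop)),
        shellMeas, ae_withDensity_iff (measurable_shellDensity _)]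
      refine ae_of_all _ fun x hx => ?_
      have hx0 : ‖x‖ ≠ 0 := by
        intro h0
        apply hx
        rw [h0, shell_eq_zero_of_le zero_le_one, ENNReal.ofReal_zero]
      rw [norm_smul, norm_inv, norm_norm, inv_mul_cancel₀ hx0])
  refine ⟨(ν univ)⁻¹ * μ univ,
    ENNReal.mul_ne_top (ENNReal.inv_ne_top.2 hν0) (measure_ne_top _ _), ?_⟩
  rw [mul_smul, ← h, smul_smul, ENNReal.inv_mul_cancel hν0 (measure_ne_top _ _), one_smul]

lemma integral_sphMeas_eq (m : ℕ) : ∃ a : ℝ, 0 ≤ a ∧ ∀ g : Euc (m + 1) → ℝ,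
    ContinuousOn g (sphere 0 1) →
      ∫ x in sphere (0 : Euc (m + 1)) 1, g x ∂(sphMeas (m + 1)) =
        a * ∫ x : Euc (m + 1), shell ‖x‖ * g (‖x‖⁻¹ • x) := by
  obtain ⟨a, ha, h⟩ := exists_sphMeas_eq m
  refine ⟨a.toReal, ENNReal.toReal_nonneg, fun g hg => ?_⟩
  rcases eq_or_ne a 0 with rfl | ha0
  · rw [h]; simp
  have hm : AEStronglyMeasurable g ((shellMeas (m + 1)).map fun x => ‖x‖⁻¹ • x) := by
    have := hg.aestronglyMeasurable (μ := sphMeas (m + 1)) isClosed_sphere.measurableSet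
    rw [h] at this
    refine this.mono_ac ?_
    intro s hs
    simpa [ha0] using hs
  rw [h, integral_smul_measure, smul_eq_mul, integral_map (measurable_normalize _).aemeasurable hm,
    shellMeas, integral_withDensity_eq_integral_toReal_smul (measurable_shellDensity _)
      (ae_of_all _ fun x => ENNReal.ofReal_lt_top)]
  simp_rw [ENNReal.toReal_ofReal (shell_nonneg _), smul_eq_mul]

/-- The density on `ℝⁿ` whose transform `absT` is, up to a factor, the cosine transform of `f`. -/
def shellExt {n : ℕ} (f : Euc n → ℝ) (x : Euc n) : ℝ := shell ‖x‖ * ‖x‖⁻¹ * f (‖x‖⁻¹ • x)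

lemma continuous_shellExt {n : ℕ} {f : Euc n → ℝ} (hf : ContinuousOn f (sphere 0 1)) :
    Continuous (shellExt f) := by
  rw [continuous_iff_continuousAt]
  intro x
  rcases eq_or_ne x 0 with rfl | hx
  · have : shellExt f =ᶠ[𝓝 0] fun _ => 0 := by
      filter_upwards [ball_mem_nhds (0 : Euc n) one_pos] with y hy
      have hy' : ‖y‖ < 1 := by simpa using hy
      rw [shellExt, shell_eq_zero_of_le hy'.le, zero_mul, zero_mul]
    exact continuousAt_const.congr this.symm
  · have hx0 : ‖x‖ ≠ 0 := norm_ne_zero_iff.2 hx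
    have hN : ContinuousOn (fun y : Euc n => ‖y‖⁻¹ • y) {0}ᶜ :=
      (ContinuousOn.inv₀ (by fun_prop) fun y hy => norm_ne_zero_iff.2 hy).smul continuousOn_id
    have hmaps : MapsTo (fun y : Euc n => ‖y‖⁻¹ • y) {0}ᶜ (sphere 0 1) := by
      intro y hy
      have : ‖y‖ ≠ 0 := norm_ne_zero_iff.2 hy
      simp [norm_smul, this]
    have h1 : ContinuousAt (fun y : Euc n => f (‖y‖⁻¹ • y)) x :=
      (hf.comp hN hmaps).continuousAt (isOpen_compl_singleton.mem_nhds hx)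
    exact ((continuous_shell.comp continuous_norm).continuousAt.mul
      (continuous_norm.continuousAt.inv₀ hx0)).mul h1

lemma shellExt_eq_zero {n : ℕ} (f : Euc n → ℝ) {x : Euc n} (hx : 3 < ‖x‖) : shellExt f x = 0 := by
  rw [shellExt, shell_eq_zero_of_ge hx.le, zero_mul, zero_mul]

lemma CNorm_nonneg {n : ℕ} (f : Euc n → ℝ) : 0 ≤ CNorm f :=
  Real.iSup_nonneg fun _ => abs_nonneg _

lemma abs_le_CNorm {n : ℕ} {f : Euc n → ℝ} (hf : ContinuousOn f (sphere 0 1)) {x : Euc n}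
    (hx : x ∈ sphere (0 : Euc n) 1) : |f x| ≤ CNorm f := by
  obtain ⟨B, hB⟩ := (isCompact_sphere (0 : Euc n) 1).exists_bound_of_continuousOn hf
  exact le_ciSup (f := fun x : sphere (0 : Euc n) 1 => |f x|)
    ⟨B, by rintro _ ⟨y, rfl⟩; exact hB y y.2⟩ ⟨x, hx⟩

lemma abs_shellExt_le {n : ℕ} {f : Euc n → ℝ} (hf : ContinuousOn f (sphere 0 1)) (x : Euc n) :
    |shellExt f x| ≤ CNorm f := by
  rcases le_or_gt ‖x‖ 1 with hx | hx
  · rw [shellExt, shell_eq_zero_of_le hx]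
    simp [CNorm_nonneg f]
  · have hx0 : ‖x‖ ≠ 0 := by linarith
    rw [shellExt, abs_mul, abs_mul, abs_of_nonneg (shell_nonneg _), abs_inv, abs_norm]
    have h1 := abs_le_CNorm hf (x := ‖x‖⁻¹ • x) (by simp [norm_smul, hx0])
    have h2 : shell ‖x‖ * ‖x‖⁻¹ ≤ 1 :=
      mul_le_one₀ (shell_le_one _) (by positivity) (inv_le_one_of_one_le₀ hx.le)
    calc _ ≤ 1 * CNorm f := mul_le_mul h2 h1 (abs_nonneg _) zero_le_one
      _ = _ := one_mul _

lemma exists_cosT_eq (m : ℕ) : ∃ a : ℝ, 0 ≤ a ∧ ∀ f : Euc (m + 1) → ℝ,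
    ContinuousOn f (sphere 0 1) → cosT f = absT fun x => a * shellExt f x := by
  obtain ⟨a, ha, h⟩ := integral_sphMeas_eq m
  refine ⟨a, ha, fun f hf => ?_⟩
  funext u
  rw [cosT, h (fun x => |⟪u, x⟫| * f x) (ContinuousOn.mul (by fun_prop) hf), absT,
    ← integral_const_mul]
  congr with x
  rw [shellExt, inner_smul_right, abs_mul, abs_inv, abs_norm]
  ring

lemma homExt_cosT {n : ℕ} (f : Euc n → ℝ) : homExt (cosT f) = cosT f := by
  funext u
  rw [homExt, cosT, cosT, ← integral_const_mul]
  congr with x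
  rcases eq_or_ne u 0 with rfl | hu
  · simp
  · have hu0 : ‖u‖ ≠ 0 := norm_ne_zero_iff.2 hu
    rw [inner_smul_left, abs_mul]
    simp only [conj_trivial, abs_inv, abs_norm]
    field_simp

end Sphere

/-- There is `c_n > 0` such that for every continuous `f` on `S^{n-1}`, the
cosine transform `Cf` is of class `C²` and `‖Cf‖_{C²} ≤ c_n ‖f‖_C`. -/
theorem cosine_transform_bounded (n : ℕ) (hn : 3 ≤ n) :
    ∃ c : ℝ, 0 < c ∧
      ∀ f : Euc n → ℝ, ContinuousOn f (sphere (0 : Euc n) 1) →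
        C2Sph (cosT f) ∧ C2Norm (cosT f) ≤ c * CNorm f := by
  obtain ⟨m, rfl⟩ : ∃ m, n = m + 1 := ⟨n - 1, by omega⟩
  obtain ⟨a, ha, hcos⟩ := exists_cosT_eq m
  obtain ⟨c, hc, hbound⟩ := exists_absT_bound (Euc (m + 1))
  refine ⟨c * a + 1, by positivity, fun f hf => ?_⟩
  have hM := CNorm_nonneg f
  have hcont : Continuous fun x => a * shellExt f x := (continuous_shellExt hf).const_mul a
  have hzero : ∀ x : Euc (m + 1), 3 < ‖x‖ → a * shellExt f x = 0 := fun x hx => by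
    rw [shellExt_eq_zero f hx, mul_zero]
  have habs : ∀ x : Euc (m + 1), |a * shellExt f x| ≤ a * CNorm f := fun x => by
    rw [abs_mul, abs_of_nonneg ha]
    exact mul_le_mul_of_nonneg_left (abs_shellExt_le hf x) ha
  constructor
  · rw [C2Sph, homExt_cosT, hcos f hf]
    exact contDiffOn_absT hcont hzero
  · rw [C2Norm, homExt_cosT, hcos f hf]
    refine Real.iSup_le (fun x => ?_) (by positivity)
    have := hbound _ _ hcont hzero habs x (by simp)
    linarith
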